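/- For every m ≥ 1 and every p ∈ (0,1), the matrix W_m^n converges entrywise to (1/(m+1))·J_m as n → ∞, where J_m is the (m+1)×(m+1) all-ones matrix; moreover the error is O((1−2pq)ⁿ). -/

import Mathlib

open Matrix Filter

/-- The `k`-th factorial moment of the binomial distribution with parameters `i` and `q`. -/
lemma sum_binomial_mul_descFactorial {p q : ℝ} (h : p + q = 1) (k i : ℕ) :
    ∑ j ∈ Finset.range (i + 1), (i.choose j : ℝ) * p ^ (i - j) * q ^ j * (j.descFactorial k : ℝ)
      = q ^ k * (i.descFactorial k : ℝ) := by
  induction k generalizing i with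
  | zero =>
    have := add_pow q p i
    rw [add_comm q p, h, one_pow] at this
    simp only [Nat.descFactorial_zero, Nat.cast_one, mul_one, pow_zero]
    rw [this]
    exact Finset.sum_congr rfl fun j _ => by ring
  | succ k ih =>
    cases i with
    | zero => simp
    | succ i =>
      rw [Finset.sum_range_succ', Nat.succ_descFactorial_succ]
      simp only [Nat.zero_descFactorial_succ, Nat.cast_zero, mul_zero, add_zero]
      have hterm : ∀ j ∈ Finset.range (i + 1),
          ((i + 1).choose (j + 1) : ℝ) * p ^ (i + 1 - (j + 1)) * q ^ (j + 1)
            * ((j + 1).descFactorial (k + 1) : ℝ)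
          = (i + 1) * q * ((i.choose j : ℝ) * p ^ (i - j) * q ^ j * (j.descFactorial k : ℝ)) := by
        intro j _
        have hc : ((i : ℝ) + 1) * (i.choose j : ℝ) = ((i + 1).choose (j + 1) : ℝ) * (j + 1) := by
          exact_mod_cast Nat.add_one_mul_choose_eq i j
        rw [Nat.succ_descFactorial_succ, Nat.add_sub_add_right]
        push_cast
        linear_combination (-(p ^ (i - j) * q ^ (j + 1) * (j.descFactorial k : ℝ))) * hc
      rw [Finset.sum_congr rfl hterm, ← Finset.mul_sum, ih]
      push_cast
      ring

/-- Binomial averaging maps polynomials of degree at most `k` to polynomials of degree at most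
`k`, and multiplies the leading coefficient by `q ^ k`. -/
lemma exists_sum_binomial_mul_eval {p q : ℝ} (h : p + q = 1) (k : ℕ) (P : Polynomial ℝ)
    (hP : P.degree < (k + 1 : ℕ)) :
    ∃ Q : Polynomial ℝ, Q.degree < (k : ℕ) ∧ ∀ i : ℕ,
      ∑ j ∈ Finset.range (i + 1), (i.choose j : ℝ) * p ^ (i - j) * q ^ j * P.eval (j : ℝ)
        = q ^ k * P.eval (i : ℝ) + Q.eval (i : ℝ) := by
  induction k generalizing P with
  | zero =>
    have hC : P = Polynomial.C (P.coeff 0) :=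
      Polynomial.eq_C_of_degree_le_zero (Nat.WithBot.lt_one_iff_le_zero.1 (by simpa using hP))
    refine ⟨0, by simp, fun i => ?_⟩
    have hs := sum_binomial_mul_descFactorial h 0 i
    simp only [Nat.descFactorial_zero, Nat.cast_one, mul_one, pow_zero] at hs
    rw [hC]
    simp only [Polynomial.eval_C, ← Finset.sum_mul, hs]
    simp
  | succ k ih =>
    have hDdeg : (descPochhammer ℝ (k + 1)).natDegree = k + 1 := descPochhammer_natDegree _ _
    have hDcoeff : (descPochhammer ℝ (k + 1)).coeff (k + 1) = 1 := by
      have := monic_descPochhammer ℝ (k + 1)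
      rwa [Polynomial.Monic, Polynomial.leadingCoeff, hDdeg] at this
    obtain ⟨R, hR⟩ : ∃ R, R = P - Polynomial.C (P.coeff (k + 1)) * descPochhammer ℝ (k + 1) :=
      ⟨_, rfl⟩
    have hRdeg : R.degree < (k + 1 : ℕ) := by
      rw [Polynomial.degree_lt_iff_coeff_zero]
      intro n hn
      rw [hR, Polynomial.coeff_sub, Polynomial.coeff_C_mul]
      rcases hn.eq_or_lt with rfl | hn
      · rw [hDcoeff]; ring
      · rw [(Polynomial.degree_lt_iff_coeff_zero _ _).1 hP n hn,
          Polynomial.coeff_eq_zero_of_natDegree_lt (hDdeg.trans_lt hn)]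
        ring
    obtain ⟨Q, hQ, hsum⟩ := ih R hRdeg
    refine ⟨(q ^ k - q ^ (k + 1)) • R + Q, ?_, fun i => ?_⟩
    · refine (Polynomial.degree_add_le _ _).trans_lt (max_lt ?_ ?_)
      · exact (Polynomial.degree_smul_le _ _).trans_lt hRdeg
      · exact hQ.trans (by exact_mod_cast Nat.lt_succ_self k)
    · have hev : ∀ j : ℕ, P.eval (j : ℝ)
          = P.coeff (k + 1) * (j.descFactorial (k + 1) : ℝ) + R.eval (j : ℝ) := by
        intro j
        rw [hR, Polynomial.eval_sub, Polynomial.eval_mul, Polynomial.eval_C,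
          descPochhammer_eval_eq_descFactorial]
        ring
      have hd := sum_binomial_mul_descFactorial h (k + 1) i
      have hs := hsum i
      simp only [Polynomial.eval_add, Polynomial.eval_smul, smul_eq_mul]
      rw [hev i]
      calc _ = P.coeff (k + 1) * ∑ j ∈ Finset.range (i + 1),
              (i.choose j : ℝ) * p ^ (i - j) * q ^ j * (j.descFactorial (k + 1) : ℝ)
            + ∑ j ∈ Finset.range (i + 1),
              (i.choose j : ℝ) * p ^ (i - j) * q ^ j * R.eval (j : ℝ) := by
            rw [Finset.mul_sum, ← Finset.sum_add_distrib]
            exact Finset.sum_congr rfl fun j _ => by rw [hev j]; ring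
        _ = _ := by rw [hd, hs]; ring

/-- In independent trials with success probability `q`, either the `(a + 1)`-st success comes
before the `(b + 1)`-st failure or the other way round. -/
lemma sum_negative_binomial_add {p q : ℝ} (h : p + q = 1) (a b : ℕ) :
    ∑ s ∈ Finset.range (b + 1), ((a + s).choose a : ℝ) * p ^ s * q ^ (a + 1)
      + ∑ s ∈ Finset.range (a + 1), ((b + s).choose b : ℝ) * q ^ s * p ^ (b + 1) = 1 := by
  have hstep : ∀ a b : ℕ,
      ∑ s ∈ Finset.range (b + 1), ((a + 1 + s).choose (a + 1) : ℝ) * p ^ s * q ^ (a + 1 + 1)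
        = ∑ s ∈ Finset.range (b + 1), ((a + s).choose a : ℝ) * p ^ s * q ^ (a + 1)
          - ((a + 1 + b).choose (a + 1) : ℝ) * p ^ (b + 1) * q ^ (a + 1) := by
    intro a b
    obtain rfl : q = 1 - p := by linarith
    induction b with
    | zero => simp; ring
    | succ b ih =>
      rw [Finset.sum_range_succ, ih, Finset.sum_range_succ _ (b + 1)]
      have hc : ((a + 1 + (b + 1)).choose (a + 1) : ℝ)
          = ((a + (b + 1)).choose a : ℝ) + ((a + 1 + b).choose (a + 1) : ℝ) := by
        rw [show a + 1 + (b + 1) = (a + (b + 1)) + 1 by ring, Nat.choose_succ_succ,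
          show a + 1 + b = a + (b + 1) by ring]
        push_cast
        ring
      rw [hc]
      ring
  induction a with
  | zero =>
    obtain rfl : q = 1 - p := by linarith
    have := geom_sum_mul p (b + 1)
    simp only [zero_add, Nat.choose_zero_right, Nat.cast_one, one_mul, pow_one,
      Finset.sum_range_one, add_zero, Nat.choose_self, pow_zero, ← Finset.sum_mul]
    linarith
  | succ a ih =>
    rw [hstep, Finset.sum_range_succ _ (a + 1)]
    have hc : (b + (a + 1)).choose b = (a + 1 + b).choose (a + 1) := by
      rw [add_comm b (a + 1), Nat.choose_symm_add]
    rw [hc]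
    linear_combination ih

/-- If `A v = μ v + g` and `A ^ n g` tends to the constant `c` at rate `r ^ n`, then `A ^ n v`
tends to the constant `c / (1 - μ)` at rate `r ^ n`. -/
lemma abs_pow_mulVec_sub_le {ι : Type*} [Fintype ι] [DecidableEq ι] {A : Matrix ι ι ℝ}
    {v g : ι → ℝ} {μ r c C D : ℝ} (hv : A *ᵥ v = μ • v + g) (hμ : 0 ≤ μ) (hμ1 : μ < 1)
    (hr : 0 ≤ r) (hg : ∀ (n : ℕ) (i : ι), |(A ^ n *ᵥ g) i - c| ≤ C * r ^ n)
    (hD : ∀ i, |v i - c / (1 - μ)| ≤ D) (hCD : μ * D + C ≤ r * D) (n : ℕ) (i : ι) :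
    |(A ^ n *ᵥ v) i - c / (1 - μ)| ≤ D * r ^ n := by
  induction n with
  | zero => simpa using hD i
  | succ n ih =>
    have hstep : (A ^ (n + 1) *ᵥ v) i = μ * (A ^ n *ᵥ v) i + (A ^ n *ᵥ g) i := by
      rw [pow_succ, ← Matrix.mulVec_mulVec, hv, Matrix.mulVec_add, Matrix.mulVec_smul]
      simp
    have h1 : (1 - μ) ≠ 0 := by linarith
    have hsplit : (A ^ (n + 1) *ᵥ v) i - c / (1 - μ)
        = μ * ((A ^ n *ᵥ v) i - c / (1 - μ)) + ((A ^ n *ᵥ g) i - c) := by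
      rw [hstep]; field_simp; ring
    calc |(A ^ (n + 1) *ᵥ v) i - c / (1 - μ)|
        ≤ μ * |(A ^ n *ᵥ v) i - c / (1 - μ)| + |(A ^ n *ᵥ g) i - c| := by
          rw [hsplit]
          refine (abs_add_le _ _).trans_eq ?_
          rw [abs_mul, abs_of_nonneg hμ]
      _ ≤ μ * (D * r ^ n) + C * r ^ n :=
          add_le_add (mul_le_mul_of_nonneg_left ih hμ) (hg n i)
      _ = (μ * D + C) * r ^ n := by ring
      _ ≤ (r * D) * r ^ n := mul_le_mul_of_nonneg_right hCD (pow_nonneg hr n)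
      _ = D * r ^ (n + 1) := by ring

/-- If `A` acts on polynomial functions of degree at most `k` as multiplication by `μ k` up to
lower degree terms, with `μ 0 = 1`, `μ 1 < 1` and `μ k < μ 1` for `k ≥ 2`, then every orbit of `A`
on polynomial functions tends to a constant at rate `μ 1 ^ n`. -/
lemma exists_abs_pow_mulVec_eval_sub_le {ι : Type*} [Fintype ι] [DecidableEq ι]
    {A : Matrix ι ι ℝ} (x : ι → ℝ) (μ : ℕ → ℝ) (hμ : ∀ k, 0 ≤ μ k) (hμ0 : μ 0 = 1)
    (hμ1 : μ 1 < 1) (hμk : ∀ k, 2 ≤ k → μ k < μ 1)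
    (hA : ∀ (k : ℕ) (P : Polynomial ℝ), P.degree < (k + 1 : ℕ) →
      ∃ Q : Polynomial ℝ, Q.degree < (k : ℕ) ∧
        A *ᵥ (fun i => P.eval (x i)) = μ k • (fun i => P.eval (x i)) + fun i => Q.eval (x i))
    (P : Polynomial ℝ) :
    ∃ c C : ℝ, ∀ (n : ℕ) (i : ι),
      |(A ^ n *ᵥ fun i => P.eval (x i)) i - c| ≤ C * μ 1 ^ n := by
  have hbdd : ∀ (v : ι → ℝ) (c : ℝ), ∃ D, ∀ i, |v i - c| ≤ D := fun v c =>
    ⟨∑ i, |v i - c|, fun i =>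
      Finset.single_le_sum (f := fun i => |v i - c|) (fun i _ => abs_nonneg _)
        (Finset.mem_univ i)⟩
  have hconst : ∀ P : Polynomial ℝ, P.degree < (1 : ℕ) → ∀ (n : ℕ) (i : ι),
      |(A ^ n *ᵥ fun i => P.eval (x i)) i - P.coeff 0| ≤ 0 * μ 1 ^ n := by
    intro P hP n i
    obtain ⟨Q, hQ, hAP⟩ := hA 0 P (by simpa using hP)
    have hQ0 : Q = 0 := by simpa using hQ
    have hC : P = Polynomial.C (P.coeff 0) :=
      Polynomial.eq_C_of_degree_le_zero (Nat.WithBot.lt_one_iff_le_zero.1 (by simpa using hP))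
    have hfix : A *ᵥ (fun i => P.eval (x i)) = fun i => P.eval (x i) := by
      rw [hAP, hQ0, hμ0]; ext; simp
    have hpow : A ^ n *ᵥ (fun i => P.eval (x i)) = fun i => P.eval (x i) := by
      induction n with
      | zero => simp
      | succ n ih => rw [pow_succ, ← Matrix.mulVec_mulVec, hfix, ih]
    have hval : P.eval (x i) = P.coeff 0 := by
      conv_lhs => rw [hC]
      simp
    simp [hpow, hval]
  have key : ∀ (k : ℕ) (P : Polynomial ℝ), P.degree < (k + 1 : ℕ) →
      ∃ c C : ℝ, ∀ (n : ℕ) (i : ι),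
        |(A ^ n *ᵥ fun i => P.eval (x i)) i - c| ≤ C * μ 1 ^ n := by
    intro k
    induction k with
    | zero => exact fun P hP => ⟨_, _, hconst P (by simpa using hP)⟩
    | succ k ih =>
      intro P hP
      obtain ⟨Q, hQ, hAP⟩ := hA (k + 1) P hP
      rcases Nat.eq_zero_or_pos k with rfl | hk
      · obtain ⟨D, hD⟩ := hbdd (fun i => P.eval (x i)) (Q.coeff 0 / (1 - μ 1))
        exact ⟨_, D, abs_pow_mulVec_sub_le hAP (hμ 1) hμ1 (hμ 1)
          (hconst Q (by simpa using hQ)) hD (by simp)⟩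
      · obtain ⟨c, C, hcC⟩ := ih Q hQ
        have hlt := hμk (k + 1) (by omega)
        obtain ⟨D, hD⟩ := hbdd (fun i => P.eval (x i)) (c / (1 - μ (k + 1)))
        have hgap : 0 < μ 1 - μ (k + 1) := by linarith
        refine ⟨_, max D (C / (μ 1 - μ (k + 1))), abs_pow_mulVec_sub_le hAP (hμ _)
          (hlt.trans hμ1) (hμ 1) hcC (fun i => (hD i).trans (le_max_left _ _)) ?_⟩
        have := (div_le_iff₀ hgap).1 (le_max_right D (C / (μ 1 - μ (k + 1))))
        linarith
  exact key P.natDegree P (Polynomial.degree_le_natDegree.trans_lt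
    (by exact_mod_cast Nat.lt_succ_self _))

/-- A matrix with unit column sums whose powers have columns tending to constant vectors at a
geometric rate has all these constants equal to the inverse of its size. -/
lemma eq_inv_card_of_abs_pow_sub_le {ι : Type*} [Fintype ι] [DecidableEq ι] [Nonempty ι]
    {A : Matrix ι ι ℝ} (hcol : ∀ j, ∑ i, A i j = 1) {r c C : ℝ} (hr : 0 ≤ r) (hr1 : r < 1)
    (j : ι) (h : ∀ (n : ℕ) (i : ι), |(A ^ n) i j - c| ≤ C * r ^ n) :
    c = 1 / (Fintype.card ι : ℝ) := by
  have hsum : ∀ n : ℕ, ∑ i, (A ^ n) i j = 1 := by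
    have hvec : (fun _ => (1 : ℝ)) ᵥ* A = fun _ => 1 := by
      ext j; simp [Matrix.vecMul, dotProduct, hcol]
    have hpow : ∀ n : ℕ, (fun _ => (1 : ℝ)) ᵥ* A ^ n = fun _ => 1 := by
      intro n
      induction n with
      | zero => simp
      | succ n ih => rw [pow_succ, ← Matrix.vecMul_vecMul, ih, hvec]
    intro n
    simpa [Matrix.vecMul, dotProduct] using congrFun (hpow n) j
  have hlim : ∀ i, Tendsto (fun n : ℕ => (A ^ n) i j) atTop (nhds c) := by
    intro i
    rw [tendsto_iff_norm_sub_tendsto_zero]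
    refine squeeze_zero (fun _ => norm_nonneg _) (fun n => h n i) ?_
    simpa using (tendsto_pow_atTop_nhds_zero_of_lt_one hr hr1).const_mul C
  have htot : Tendsto (fun n : ℕ => ∑ i, (A ^ n) i j) atTop (nhds (∑ _i : ι, c)) :=
    tendsto_finsetSum _ fun i _ => hlim i
  simp only [hsum] at htot
  have := tendsto_nhds_unique htot tendsto_const_nhds
  rw [Finset.sum_const, Finset.card_univ, nsmul_eq_mul] at this
  have hcard : (Fintype.card ι : ℝ) ≠ 0 := by exact_mod_cast Fintype.card_ne_zero
  field_simp
  linarith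

/-- A sum over `Fin (m + 1)` of terms supported on indices at most `i` is a sum over
`Finset.range (i + 1)`. -/
lemma sum_fin_ite_le_eq_sum_range {m i : ℕ} (hi : i ≤ m) (f : ℕ → ℝ) :
    ∑ j : Fin (m + 1), (if (j : ℕ) ≤ i then f j else 0) = ∑ j ∈ Finset.range (i + 1), f j := by
  rw [Fin.sum_univ_eq_sum_range (fun j => if j ≤ i then f j else 0) (m + 1),
    ← Finset.sum_filter]
  congr 1
  ext j
  simp only [Finset.mem_filter, Finset.mem_range]
  omega

/-- `W_mⁿ` converges entrywise to `(1/(m+1)) J_m`, with error `O((1-2pq)ⁿ)`. -/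
theorem Wm_pow_tendsto (p : ℝ) (hp : p ∈ Set.Ioo (0:ℝ) 1) (q : ℝ) (hq : q = 1 - p)
    (m : ℕ) (hm : 1 ≤ m)
    (L U W : Matrix (Fin (m + 1)) (Fin (m + 1)) ℝ)
    (hL : ∀ i j : Fin (m + 1),
      L i j = if (j : ℕ) ≤ (i : ℕ) then ((i : ℕ).choose ((i : ℕ) - (j : ℕ)) : ℝ)
        * p ^ ((i : ℕ) - (j : ℕ)) * q ^ ((j : ℕ) + 1) else 0)
    (hU : ∀ i j : Fin (m + 1),
      U i j = if (i : ℕ) ≤ (j : ℕ) then ((m - (i : ℕ)).choose ((j : ℕ) - (i : ℕ)) : ℝ)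
        * p ^ (m + 1 - (j : ℕ)) * q ^ ((j : ℕ) - (i : ℕ)) else 0)
    (hW : W = L + U) :
    (∀ i j : Fin (m + 1),
      Tendsto (fun n : ℕ => (W ^ n) i j) atTop (nhds (1 / (m + 1 : ℝ)))) ∧
    ∃ Cbd : ℝ, ∀ (n : ℕ) (i j : Fin (m + 1)),
      |(W ^ n) i j - 1 / (m + 1 : ℝ)| ≤ Cbd * (1 - 2 * p * q) ^ n := by
  obtain ⟨hp0, hp1⟩ := hp
  have hpq : p + q = 1 := by linarith
  have hq0 : 0 < q := by linarith
  have hq1 : q < 1 := by linarith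
  have hLsum : ∀ (i : Fin (m + 1)) (f : ℕ → ℝ), ∑ j, L i j * f j
      = q * ∑ j ∈ Finset.range (i + 1),
        ((i : ℕ).choose j : ℝ) * p ^ ((i : ℕ) - j) * q ^ j * f j := by
    intro i f
    rw [← sum_fin_ite_le_eq_sum_range (Nat.lt_succ_iff.1 i.2), Finset.mul_sum]
    refine Finset.sum_congr rfl fun j _ => ?_
    rw [hL]
    split_ifs with h
    · rw [Nat.choose_symm h]; ring
    · simp
  have hUsum : ∀ (i : Fin (m + 1)) (f : ℕ → ℝ), ∑ j, U i j * f (m - j)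
      = p * ∑ j ∈ Finset.range (m - i + 1),
        ((m - (i : ℕ)).choose j : ℝ) * q ^ (m - (i : ℕ) - j) * p ^ j * f j := by
    intro i f
    rw [← sum_fin_ite_le_eq_sum_range (Nat.sub_le m i), Finset.mul_sum,
      ← Equiv.sum_comp Fin.revPerm]
    refine Finset.sum_congr rfl fun j _ => ?_
    rw [hU, Fin.revPerm_apply, Fin.val_rev]
    have hi := i.2
    have hj := j.2
    by_cases h : (j : ℕ) ≤ m - i
    · rw [if_pos h, if_pos (by omega), show m + 1 - (m + 1 - ((j : ℕ) + 1)) = j + 1 by omega,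
        show m + 1 - ((j : ℕ) + 1) - i = m - i - j by omega,
        show m - (m + 1 - ((j : ℕ) + 1)) = j by omega, Nat.choose_symm h]
      ring
    · rw [if_neg h, if_neg (by omega)]
      simp
  have hact : ∀ (k : ℕ) (P : Polynomial ℝ), P.degree < (k + 1 : ℕ) →
      ∃ Q : Polynomial ℝ, Q.degree < (k : ℕ) ∧
        W *ᵥ (fun i => P.eval ((i : ℕ) : ℝ))
          = (p ^ (k + 1) + q ^ (k + 1)) • (fun i : Fin (m + 1) => P.eval ((i : ℕ) : ℝ))
            + fun i : Fin (m + 1) => Q.eval ((i : ℕ) : ℝ) := by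
    intro k P hP
    have hrefl : ∀ (R : Polynomial ℝ) (d : ℕ), R.degree < d →
        (R.comp (Polynomial.C (m : ℝ) - Polynomial.X)).degree < d := by
      intro R d hR
      by_cases hR0 : R = 0
      · simp [hR0]
      · refine Polynomial.degree_le_natDegree.trans_lt ?_
        rw [Polynomial.natDegree_comp, Polynomial.natDegree_sub, Polynomial.natDegree_X_sub_C,
          mul_one, ← Polynomial.degree_eq_natDegree hR0]
        exact hR
    obtain ⟨Q₁, hQ₁, hs₁⟩ := exists_sum_binomial_mul_eval hpq k P hP
    obtain ⟨Q₂, hQ₂, hs₂⟩ := exists_sum_binomial_mul_eval ((add_comm q p).trans hpq) k _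
      (hrefl P _ hP)
    refine ⟨q • Q₁ + p • Q₂.comp (Polynomial.C (m : ℝ) - Polynomial.X), ?_, ?_⟩
    · refine (Polynomial.degree_add_le _ _).trans_lt (max_lt ?_ ?_)
      · exact (Polynomial.degree_smul_le _ _).trans_lt hQ₁
      · exact (Polynomial.degree_smul_le _ _).trans_lt (hrefl _ _ hQ₂)
    · ext i
      have hi : ((m - (i : ℕ) : ℕ) : ℝ) = (m : ℝ) - (i : ℕ) :=
        Nat.cast_sub (Nat.lt_succ_iff.1 i.2)
      have h₁ : ∑ j, L i j * P.eval ((j : ℕ) : ℝ)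
          = q * (q ^ k * P.eval ((i : ℕ) : ℝ) + Q₁.eval ((i : ℕ) : ℝ)) := by
        rw [hLsum i fun j => P.eval (j : ℝ), hs₁]
      have h₂ : ∑ j, U i j * P.eval ((j : ℕ) : ℝ)
          = p * (p ^ k * P.eval ((i : ℕ) : ℝ) + Q₂.eval ((m : ℝ) - (i : ℕ))) := by
        have := hUsum i fun j => (P.comp (Polynomial.C (m : ℝ) - Polynomial.X)).eval (j : ℝ)
        rw [hs₂, hi] at this
        simp only [Polynomial.eval_comp, Polynomial.eval_sub, Polynomial.eval_C,
          Polynomial.eval_X, sub_sub_cancel] at this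
        rw [← this]
        refine Finset.sum_congr rfl fun j _ => ?_
        rw [Nat.cast_sub (Nat.lt_succ_iff.1 j.2), sub_sub_cancel]
      simp only [hW, Pi.add_apply, Pi.smul_apply, smul_eq_mul, Matrix.mulVec, dotProduct,
        Matrix.add_apply, add_mul, Finset.sum_add_distrib, h₁, h₂, Polynomial.eval_add,
        Polynomial.eval_smul, Polynomial.eval_C, Polynomial.eval_comp, Polynomial.eval_sub,
        Polynomial.eval_X]
      ring
  have hcol : ∀ j, ∑ i, W i j = 1 := by
    intro j
    have hj := Nat.lt_succ_iff.1 j.2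
    rw [hW, ← sum_negative_binomial_add hpq j (m - j)]
    simp only [Matrix.add_apply, Finset.sum_add_distrib]
    congr 1
    · simp only [hL]
      rw [Fin.sum_univ_eq_sum_range (fun i => if (j : ℕ) ≤ i then
          (i.choose (i - j) : ℝ) * p ^ (i - j) * q ^ ((j : ℕ) + 1) else 0) (m + 1),
        ← Finset.sum_filter, show (Finset.range (m + 1)).filter (fun i => (j : ℕ) ≤ i)
          = Finset.Ico (j : ℕ) (m + 1) by ext; simp; omega,
        Finset.sum_Ico_eq_sum_range, Nat.sub_add_comm hj]
      refine Finset.sum_congr rfl fun s _ => ?_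
      rw [Nat.add_sub_cancel_left, Nat.choose_symm_add]
    · simp only [hU]
      rw [sum_fin_ite_le_eq_sum_range hj fun i => ((m - i).choose (j - i) : ℝ)
          * p ^ (m + 1 - (j : ℕ)) * q ^ (j - i), ← Finset.sum_range_reflect]
      refine Finset.sum_congr rfl fun s hs => ?_
      have hs' := Finset.mem_range.1 hs
      rw [show (j : ℕ) - (j + 1 - 1 - s) = s by omega,
        show m - ((j : ℕ) + 1 - 1 - s) = m - j + s by omega,
        show m + 1 - (j : ℕ) = m - j + 1 by omega, Nat.choose_symm_add]
      ring
  have hr : 1 - 2 * p * q = p ^ (1 + 1) + q ^ (1 + 1) := by rw [hq]; ring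
  have hr0 : 0 ≤ 1 - 2 * p * q := by rw [hr]; positivity
  have hr1 : 1 - 2 * p * q < 1 := by nlinarith [mul_pos hp0 hq0]
  have hrate : ∀ j : Fin (m + 1), ∃ C : ℝ, ∀ (n : ℕ) (i : Fin (m + 1)),
      |(W ^ n) i j - 1 / (m + 1 : ℝ)| ≤ C * (1 - 2 * p * q) ^ n := by
    intro j
    have hinj : Set.InjOn (fun i : Fin (m + 1) => ((i : ℕ) : ℝ)) (Finset.univ : Finset (Fin (m + 1))) :=
      fun a _ b _ hab => Fin.ext (Nat.cast_injective hab)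
    obtain ⟨c, C, hcC⟩ := exists_abs_pow_mulVec_eval_sub_le (A := W)
      (fun i : Fin (m + 1) => ((i : ℕ) : ℝ)) (fun k => p ^ (k + 1) + q ^ (k + 1))
      (fun k => by positivity) (by simpa using hpq) (hr ▸ hr1)
      (fun k hk => add_lt_add (pow_lt_pow_right_of_lt_one₀ hp0 hp1 (by omega))
        (pow_lt_pow_right_of_lt_one₀ hq0 hq1 (by omega)))
      hact (Lagrange.interpolate Finset.univ (fun i : Fin (m + 1) => ((i : ℕ) : ℝ))
        (Pi.single j 1))
    have hsingle : (fun i : Fin (m + 1) => (Lagrange.interpolate Finset.univ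
        (fun i : Fin (m + 1) => ((i : ℕ) : ℝ)) (Pi.single j 1)).eval ((i : ℕ) : ℝ))
        = Pi.single j 1 :=
      funext fun i => Lagrange.eval_interpolate_at_node _ hinj (Finset.mem_univ i)
    have hentry : ∀ (n : ℕ) (i : Fin (m + 1)), |(W ^ n) i j - c| ≤ C * (1 - 2 * p * q) ^ n := by
      intro n i
      have := hcC n i
      rw [hsingle, Matrix.mulVec_single_one] at this
      rw [hr]
      exact this
    have hc := eq_inv_card_of_abs_pow_sub_le hcol hr0 hr1 j hentry
    rw [Fintype.card_fin, Nat.cast_add_one] at hc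
    exact ⟨C, hc ▸ hentry⟩
  choose C hC using hrate
  have hbound : ∀ (n : ℕ) (i j : Fin (m + 1)),
      |(W ^ n) i j - 1 / (m + 1 : ℝ)| ≤ (∑ j, |C j|) * (1 - 2 * p * q) ^ n := by
    intro n i j
    refine (hC j n i).trans (mul_le_mul_of_nonneg_right ?_ (pow_nonneg hr0 n))
    exact (le_abs_self _).trans
      (Finset.single_le_sum (f := fun j => |C j|) (fun j _ => abs_nonneg _) (Finset.mem_univ j))
  refine ⟨fun i j => ?_, _, hbound⟩
  rw [tendsto_iff_norm_sub_tendsto_zero]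
  refine squeeze_zero (fun _ => norm_nonneg _) (fun n => hbound n i j) ?_
  simpa using (tendsto_pow_atTop_nhds_zero_of_lt_one hr0 hr1).const_mul (∑ j, |C j|)
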